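/- Let n be a positive integer and b = −n + i ∈ ℤ[i]. Every complex number z admits a radix expansion in base b: there exist an integer ℓ ≥ 0 and digits d_k ∈ {0, 1, ..., n²} (= {0,...,|b|²−1}) for k ≤ ℓ such that z = d_ℓ b^ℓ + d_{ℓ−1} b^{ℓ−1} + ⋯ + d_0 + ∑_{k=1}^∞ d_{−k} b^{−k}. -/

import Mathlib

open Filter Topology

/-- finite radix expansions -/
def FinExp (n : ℕ) (w : ℂ) : Prop :=
  ∃ (L : ℕ) (d : ℕ → ℕ), (∀ k, d k ≤ n ^ 2) ∧
    w = ∑ k ∈ Finset.range L, (d k : ℂ) * (-(n : ℂ) + Complex.I) ^ k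

lemma finExp_zero (n : ℕ) : FinExp n 0 := ⟨0, fun _ => 0, by simp, by simp⟩

lemma finExp_cons (n : ℕ) (w : ℂ) (r : ℕ) (hr : r ≤ n ^ 2) (h : FinExp n w) :
    FinExp n (r + (-(n : ℂ) + Complex.I) * w) := by
  obtain ⟨L, d, hd, rfl⟩ := h
  refine ⟨L + 1, fun k => Nat.casesOn k r d, ?_, ?_⟩
  · intro k
    cases k with
    | zero => exact hr
    | succ k => exact hd k
  · rw [Finset.sum_range_succ', Finset.mul_sum]
    simp only [pow_zero, mul_one]
    rw [add_comm]
    congr 1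
    apply Finset.sum_congr rfl
    intro k _
    ring

lemma finExp_aux (n : ℕ) (hn : 1 ≤ n) (S : ℕ) : ∀ (M : ℕ) (a b c : ℕ), a + b + c = S →
    (((a : ℤ) - n * b + (n ^ 2 - 1) * c) ^ 2 + ((b : ℤ) - 2 * n * c) ^ 2) = M →
    FinExp n (a + b * (-(n : ℂ) + Complex.I) + c * (-(n : ℂ) + Complex.I) ^ 2) := by
  induction S using Nat.strong_induction_on with
  | _ S ihS =>
  intro M
  induction M using Nat.strong_induction_on with
  | _ M ihM =>
  intro a b c hS hM
  obtain ⟨m, rfl⟩ : ∃ m, n = m + 1 := ⟨n - 1, by omega⟩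
  have hI : Complex.I ^ 2 = -1 := Complex.I_sq
  have hI3 : Complex.I ^ 3 = -Complex.I := by rw [pow_succ, hI]; ring
  rcases Nat.eq_zero_or_pos M with h0 | hpos
  · subst h0
    have h1 : ((a : ℤ) - (m + 1 : ℕ) * b + ((m + 1 : ℕ) ^ 2 - 1) * c) = 0 := by
      push_cast at hM ⊢; nlinarith
    have h2 : ((b : ℤ) - 2 * (m + 1 : ℕ) * c) = 0 := by
      push_cast at hM ⊢; nlinarith
    have h1' : ((a : ℂ) - (m + 1 : ℕ) * b + ((m + 1 : ℕ) ^ 2 - 1) * c) = 0 := by exact_mod_cast h1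
    have h2' : ((b : ℂ) - 2 * (m + 1 : ℕ) * c) = 0 := by exact_mod_cast h2
    convert finExp_zero (m + 1) using 1
    linear_combination h1' + h2' * Complex.I + c * hI
  · obtain ⟨q, r, hr, hqr⟩ : ∃ q r : ℕ, r ≤ (m + 1) ^ 2 ∧ a = r + ((m + 1) ^ 2 + 1) * q :=
      ⟨a / ((m + 1) ^ 2 + 1), a % ((m + 1) ^ 2 + 1),
        Nat.lt_succ_iff.mp (Nat.mod_lt _ (Nat.succ_pos _)), (Nat.mod_add_div _ _).symm⟩
    have key : FinExp (m + 1) (((b + m ^ 2 * q : ℕ) : ℂ)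
        + ((c + (2 * m + 1) * q : ℕ) : ℂ) * (-((m + 1 : ℕ) : ℂ) + Complex.I)
        + (q : ℂ) * (-((m + 1 : ℕ) : ℂ) + Complex.I) ^ 2) := by
      rcases Nat.eq_zero_or_pos r with hr0 | hrpos
      · subst hr0
        set M' : ℤ := (((b + m ^ 2 * q : ℕ) : ℤ) - (m + 1 : ℕ) * (c + (2 * m + 1) * q : ℕ)
          + ((m + 1 : ℕ) ^ 2 - 1) * q) ^ 2
          + (((c + (2 * m + 1) * q : ℕ) : ℤ) - 2 * (m + 1 : ℕ) * q) ^ 2 with hM'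
        have hM'0 : 0 ≤ M' := by positivity
        have hmul : (M : ℤ) = ((m + 1) ^ 2 + 1) * M' := by
          rw [← hM, hM', hqr]; push_cast; ring
        have hlt : M' < M := by
          have : (0 : ℤ) < M := by exact_mod_cast hpos
          have hM'1 : 0 < M' := by
            rcases hM'0.lt_or_eq with h | h
            · exact h
            · rw [← h] at hmul; omega
          rw [hmul]
          nlinarith [mul_pos (show (0 : ℤ) < (m + 1) ^ 2 by positivity) hM'1]
        apply ihM M'.toNat (by omega)
        · rw [← hS, hqr]; ring
        · rw [Int.toNat_of_nonneg hM'0]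
      · refine ihS (S - r) (by omega) (((((b + m ^ 2 * q : ℕ) : ℤ)
          - (m + 1 : ℕ) * (c + (2 * m + 1) * q : ℕ)
          + ((m + 1 : ℕ) ^ 2 - 1) * q) ^ 2
          + (((c + (2 * m + 1) * q : ℕ) : ℤ) - 2 * (m + 1 : ℕ) * q) ^ 2)).toNat _ _ _ ?_ ?_
        · have : b + m ^ 2 * q + (c + (2 * m + 1) * q) + q + r = S := by
            rw [← hS, hqr]; ring
          omega
        · rw [Int.toNat_of_nonneg (by positivity)]
    convert finExp_cons (m + 1) _ r hr key using 1
    rw [hqr]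
    push_cast
    ring_nf
    rw [hI, hI3]
    ring

lemma finExp_gauss (n : ℕ) (hn : 1 ≤ n) (x y : ℤ) : FinExp n (x + y * Complex.I) := by
  -- x + y i = (x + n y) + y b
  obtain ⟨k, hk1, hk2⟩ : ∃ k : ℕ, 0 ≤ x + n * y + k * (n ^ 2 + 1) ∧ 0 ≤ y + k * (2 * n) := by
    refine ⟨(x + n * y).natAbs + y.natAbs, ?_, ?_⟩
    · have h1 : -(x + n * y) ≤ ((x + n * y).natAbs : ℤ) := by omega
      push_cast
      nlinarith [abs_nonneg (x + n * y), abs_nonneg y, neg_abs_le (x + n * y), sq_nonneg (n : ℤ),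
        mul_nonneg (abs_nonneg (x + n * y)) (sq_nonneg (n : ℤ)),
        mul_nonneg (abs_nonneg y) (sq_nonneg (n : ℤ))]
    · have h1 : (1 : ℤ) ≤ n := by exact_mod_cast hn
      push_cast
      nlinarith [abs_nonneg (x + n * y), abs_nonneg y, neg_abs_le y,
        mul_nonneg (abs_nonneg (x + n * y)) (show (0 : ℤ) ≤ n by omega),
        mul_nonneg (abs_nonneg y) (show (0 : ℤ) ≤ n - 1 by omega)]
  obtain ⟨a, ha⟩ := Int.eq_ofNat_of_zero_le hk1
  obtain ⟨b, hb⟩ := Int.eq_ofNat_of_zero_le hk2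
  have ha' : (x : ℂ) + n * y + k * (n ^ 2 + 1) = a := by exact_mod_cast ha
  have hb' : (y : ℂ) + k * (2 * n) = b := by exact_mod_cast hb
  convert finExp_aux n hn (a + b + k) _ a b k rfl (Int.toNat_of_nonneg (by positivity)).symm using 1
  rw [← ha', ← hb']
  linear_combination (-(k : ℂ)) * Complex.I_sq

/-- the fractional-part map -/
noncomputable def fracMap (n : ℕ) (d : ℕ → Fin (n ^ 2 + 1)) : ℂ :=
  ∑' j : ℕ, ((d j : ℕ) : ℂ) * ((-(n : ℂ) + Complex.I)⁻¹) ^ (j + 1)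

lemma base_normSq (n : ℕ) : ‖(-(n : ℂ) + Complex.I)‖ ^ 2 = (n : ℝ) ^ 2 + 1 := by
  rw [← Complex.normSq_eq_norm_sq, Complex.normSq_apply]
  simp
  ring

lemma base_norm (n : ℕ) (hn : 1 ≤ n) : 1 < ‖(-(n : ℂ) + Complex.I)‖ := by
  have h := base_normSq n
  have h1 : (1 : ℝ) ≤ n := by exact_mod_cast hn
  nlinarith [norm_nonneg (-(n : ℂ) + Complex.I)]

lemma base_inv_norm (n : ℕ) (hn : 1 ≤ n) : ‖(-(n : ℂ) + Complex.I)⁻¹‖ < 1 := by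
  rw [norm_inv]
  exact inv_lt_one_of_one_lt₀ (base_norm n hn)

lemma frac_bound (n : ℕ) (j : ℕ) (d : ℕ → Fin (n ^ 2 + 1)) :
    ‖((d j : ℕ) : ℂ) * ((-(n : ℂ) + Complex.I)⁻¹) ^ (j + 1)‖ ≤
      (n : ℝ) ^ 2 * ‖(-(n : ℂ) + Complex.I)⁻¹‖ ^ (j + 1) := by
  rw [norm_mul, norm_pow, Complex.norm_natCast]
  gcongr
  exact_mod_cast Nat.lt_succ_iff.mp (d j).2

lemma frac_summable_bound (n : ℕ) (hn : 1 ≤ n) :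
    Summable fun j : ℕ => (n : ℝ) ^ 2 * ‖(-(n : ℂ) + Complex.I)⁻¹‖ ^ (j + 1) := by
  apply Summable.mul_left
  exact (summable_nat_add_iff 1).2
    (summable_geometric_of_lt_one (norm_nonneg _) (base_inv_norm n hn))

lemma frac_summable (n : ℕ) (hn : 1 ≤ n) (d : ℕ → Fin (n ^ 2 + 1)) :
    Summable fun j : ℕ => ((d j : ℕ) : ℂ) * ((-(n : ℂ) + Complex.I)⁻¹) ^ (j + 1) :=
  Summable.of_norm_bounded (frac_summable_bound n hn) (fun j => frac_bound n j d)

lemma fracMap_continuous (n : ℕ) (hn : 1 ≤ n) : Continuous (fracMap n) := by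
  refine continuous_tsum (fun j => ?_) (frac_summable_bound n hn) (fun j d => frac_bound n j d)
  have : Continuous fun i : Fin (n ^ 2 + 1) => ((i : ℕ) : ℂ) := continuous_of_discreteTopology
  exact (this.comp (continuous_apply j)).mul continuous_const

lemma fracMap_cons (n : ℕ) (hn : 1 ≤ n) (d : ℕ → Fin (n ^ 2 + 1)) (r : Fin (n ^ 2 + 1)) :
    fracMap n (fun k => Nat.casesOn k r d) =
      (-(n : ℂ) + Complex.I)⁻¹ * (((r : ℕ) : ℂ) + fracMap n d) := by
  unfold fracMap
  rw [(frac_summable n hn (fun k => Nat.casesOn k r d)).tsum_eq_zero_add, mul_add, ← tsum_mul_left]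
  congr 1
  · simp; ring
  · apply tsum_congr
    intro j
    simp only
    ring

/-- Gaussian integers as a set. -/
def gaussSet : Set ℂ := {w | w.re ∈ Set.range ((↑) : ℤ → ℝ) ∧ w.im ∈ Set.range ((↑) : ℤ → ℝ)}

lemma gaussSet_closed : IsClosed gaussSet := by
  have h := Int.isClosedEmbedding_coe_real.isClosed_range
  exact (h.preimage Complex.continuous_re).inter (h.preimage Complex.continuous_im)

lemma mem_gaussSet (w : ℂ) : w ∈ gaussSet ↔ ∃ x y : ℤ, w = x + y * Complex.I := by
  constructor
  · rintro ⟨⟨x, hx⟩, ⟨y, hy⟩⟩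
    exact ⟨x, y, by apply Complex.ext <;> simp [← hx, ← hy]⟩
  · rintro ⟨x, y, rfl⟩
    exact ⟨⟨x, by simp⟩, ⟨y, by simp⟩⟩

/-- Numbers with Gaussian integral part and radix fractional part. -/
def goodSet (n : ℕ) : Set ℂ := {w | ∃ g ∈ gaussSet, ∃ d, w = g + fracMap n d}

lemma goodSet_closed (n : ℕ) (hn : 1 ≤ n) : IsClosed (goodSet n) := by
  have hK : IsCompact (Set.range (fracMap n)) := isCompact_range (fracMap_continuous n hn)
  have := gaussSet_closed.add_right_of_isCompact hK
  convert this using 1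
  ext w
  rw [Set.mem_add]
  constructor
  · rintro ⟨g, hg, d, rfl⟩
    exact ⟨g, hg, _, ⟨d, rfl⟩, rfl⟩
  · rintro ⟨g, hg, _, ⟨d, rfl⟩, rfl⟩
    exact ⟨g, hg, d, rfl⟩

lemma goodSet_div (n : ℕ) (hn : 1 ≤ n) (w : ℂ) (hw : w ∈ goodSet n) :
    (-(n : ℂ) + Complex.I)⁻¹ * w ∈ goodSet n := by
  obtain ⟨g, hg, d, rfl⟩ := hw
  obtain ⟨x, y, rfl⟩ := (mem_gaussSet g).1 hg
  have hb : (-(n : ℂ) + Complex.I) ≠ 0 := by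
    intro h; have := base_norm n hn; rw [h] at this; simp at this; linarith
  have hN : (0 : ℤ) < (n : ℤ) ^ 2 + 1 := by positivity
  obtain ⟨r, hr⟩ := Int.eq_ofNat_of_zero_le (Int.emod_nonneg (x + n * y) hN.ne')
  have hlt := Int.emod_lt_of_pos (x + n * y) hN
  rw [hr] at hlt
  have hlt' : r < n ^ 2 + 1 := by exact_mod_cast hlt
  have hdm := Int.emod_add_mul_ediv (x + n * y) ((n : ℤ) ^ 2 + 1)
  rw [hr] at hdm
  set v : ℤ := (x + n * y) / ((n : ℤ) ^ 2 + 1)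
  have hdm' : (r : ℂ) + ((n : ℂ) ^ 2 + 1) * v = x + n * y := by exact_mod_cast hdm
  refine ⟨((y - n * v : ℤ) : ℂ) + ((-v : ℤ) : ℂ) * Complex.I, (mem_gaussSet _).2 ⟨_, _, rfl⟩,
    fun k => Nat.casesOn k ⟨r, hlt'⟩ d, ?_⟩
  rw [fracMap_cons n hn]
  apply mul_left_cancel₀ hb
  rw [mul_inv_cancel_left₀ hb, mul_add _ (_ + _ * Complex.I), mul_inv_cancel_left₀ hb]
  push_cast
  linear_combination (-1 : ℂ) * hdm' + (v : ℂ) * Complex.I_sq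

lemma goodSet_pow (n : ℕ) (hn : 1 ≤ n) (x y : ℤ) (k : ℕ) :
    ((-(n : ℂ) + Complex.I)⁻¹) ^ k * (x + y * Complex.I) ∈ goodSet n := by
  induction k with
  | zero =>
    exact ⟨_, (mem_gaussSet _).2 ⟨x, y, rfl⟩, fun _ => 0, by simp [fracMap]⟩
  | succ k ih =>
    rw [pow_succ', mul_assoc]
    exact goodSet_div n hn _ ih

lemma goodSet_all (n : ℕ) (hn : 1 ≤ n) (z : ℂ) : z ∈ goodSet n := by
  set b : ℂ := -(n : ℂ) + Complex.I with hbdef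
  have hb : b ≠ 0 := by
    intro h; have := base_norm n hn; rw [← hbdef, h] at this; simp at this; linarith
  let g : ℕ → ℂ := fun k => (round (b ^ k * z).re : ℤ) + (round (b ^ k * z).im : ℤ) * Complex.I
  have hlim : Tendsto (fun k => (b⁻¹) ^ k * g k) atTop (𝓝 z) := by
    rw [tendsto_iff_norm_sub_tendsto_zero]
    have h0 : Tendsto (fun k : ℕ => ‖b⁻¹‖ ^ k * 1) atTop (𝓝 0) := by
      simpa using (tendsto_pow_atTop_nhds_zero_of_lt_one (norm_nonneg _) (base_inv_norm n hn))
    refine squeeze_zero (fun _ => norm_nonneg _) (fun k => ?_) h0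
    have e : (b⁻¹) ^ k * g k - z = (b⁻¹) ^ k * (g k - b ^ k * z) := by
      rw [mul_sub, ← mul_assoc, ← mul_pow, inv_mul_cancel₀ hb, one_pow, one_mul]
    rw [e, norm_mul, norm_pow]
    gcongr
    refine (Complex.norm_le_abs_re_add_abs_im _).trans ?_
    have h1 := abs_sub_round (b ^ k * z).re
    have h2 := abs_sub_round (b ^ k * z).im
    rw [abs_sub_comm] at h1 h2
    have e1 : (g k - b ^ k * z).re = (round (b ^ k * z).re : ℤ) - (b ^ k * z).re := by
      simp [g]
    have e2 : (g k - b ^ k * z).im = (round (b ^ k * z).im : ℤ) - (b ^ k * z).im := by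
      simp [g]
    rw [e1, e2]
    linarith
  exact (goodSet_closed n hn).mem_of_tendsto hlim
    (Eventually.of_forall fun k => goodSet_pow n hn _ _ k)

/-- Kátai–Szabó: for `b = -n + i` with `n ≥ 1`, every complex number `z`
admits a radix expansion `z = d_ℓ b^ℓ + ⋯ + d_0 + ∑_{k≥1} d_{-k} b^{-k}`
with all digits in `{0,…,n²}`. -/
theorem stmt3 (n : ℕ) (hn : 1 ≤ n) (z : ℂ) :
    ∃ (ℓ : ℕ) (d : ℤ → ℕ), (∀ k, d k ≤ n ^ 2) ∧ (∀ k : ℤ, (ℓ : ℤ) < k → d k = 0) ∧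
      z = (∑ k ∈ Finset.range (ℓ + 1), (d k : ℂ) * (-(n : ℂ) + Complex.I) ^ k) +
        ∑' j : ℕ, (d (-(j + 1 : ℤ)) : ℂ) * (-(n : ℂ) + Complex.I) ^ (-(j + 1 : ℤ)) := by
  obtain ⟨w, hw, f, rfl⟩ := goodSet_all n hn z
  obtain ⟨x, y, rfl⟩ := (mem_gaussSet w).1 hw
  obtain ⟨L, e, he, hsum⟩ := finExp_gauss n hn x y
  refine ⟨L, fun k => if 0 ≤ k then (if k < L then e k.toNat else 0)
    else (f ((-k).toNat - 1) : ℕ), ?_, ?_, ?_⟩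
  · intro k
    dsimp only
    split_ifs
    · exact he _
    · exact Nat.zero_le _
    · exact Nat.lt_succ_iff.mp (f _).2
  · intro k hk
    dsimp only
    rw [if_pos (by omega), if_neg (by omega)]
  · rw [hsum]
    congr 1
    · rw [Finset.sum_range_succ]
      simp only [Int.natCast_nonneg, if_true, lt_irrefl, if_false, Nat.cast_zero, zero_mul, add_zero]
      apply Finset.sum_congr rfl
      intro k hk
      rw [if_pos (by exact_mod_cast Finset.mem_range.1 hk)]
      simp
    · unfold fracMap
      apply tsum_congr
      intro j
      dsimp only
      rw [if_neg (by omega)]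
      have h1 : (-(-(j + 1 : ℤ))).toNat - 1 = j := by omega
      rw [h1, zpow_neg, inv_pow]
      norm_cast
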